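/- If a finite set Φ of CPL₀ labelled sequents is ⇝-normal (no set-decomposition step applies to it), then every sequent in Φ is valid if and only if every sequent in Φ is derivable in the proof system for CPL₀. -/

import Mathlib

open MeasureTheory

/-- The Cantor space `2^ω` of infinite binary sequences. -/
abbrev Cantor : Type := ℕ → Bool

/-- Rational numbers in the unit interval `[0,1]`. -/
abbrev I01 : Type := (Set.Icc (0 : ℚ) 1)

/-- The value of a rational `q ∈ [0,1]` as an extended nonnegative real. -/
noncomputable def qq (q : I01) : ENNReal := ENNReal.ofReal (q.1 : ℝ)

/-- `μ` is the fair-coin Bernoulli (uniform) product measure on the Cantor space: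
it is a probability measure giving each cylinder fixing the values on a finite set `s`
of coordinates the measure `2^{-|s|}`. -/
def IsCantorMeasure (μ : Measure Cantor) : Prop :=
  IsProbabilityMeasure μ ∧
    ∀ (s : Finset ℕ) (v : ℕ → Bool),
      μ {f : Cantor | ∀ i ∈ s, f i = v i} = (2 : ENNReal)⁻¹ ^ s.card

/-- Boolean formulas `b ::= xᵢ | ⊤ | ⊥ | ¬b | b ∧ c | b ∨ c`. -/
inductive BF : Type where
  | var : ℕ → BF
  | tt : BF
  | ff : BF
  | neg : BF → BF
  | conj : BF → BF → BF
  | disj : BF → BF → BF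
deriving DecidableEq

/-- The interpretation `⟦b⟧ ⊆ 2^ω` of a Boolean formula. -/
def BF.sem : BF → Set Cantor
  | .var i => {f | f i = true}
  | .tt => Set.univ
  | .ff => ∅
  | .neg b => (BF.sem b)ᶜ
  | .conj b c => BF.sem b ∩ BF.sem c
  | .disj b c => BF.sem b ∪ BF.sem c

/-- Formulas of univariate counting propositional logic CPL₀:
`A ::= i | ¬A | A ∧ B | A ∨ B | C^q A | D^q A` with `q` a rational in `[0,1]`. -/
inductive CPL0 : Type where
  | atom : ℕ → CPL0
  | neg : CPL0 → CPL0
  | conj : CPL0 → CPL0 → CPL0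
  | disj : CPL0 → CPL0 → CPL0
  | cnt : I01 → CPL0 → CPL0
  | dnt : I01 → CPL0 → CPL0
deriving DecidableEq

open scoped Classical in
/-- The interpretation `⟦A⟧ ⊆ 2^ω` of a CPL₀ formula (relative to the measure `μ`). -/
noncomputable def CPL0.sem (μ : Measure Cantor) : CPL0 → Set Cantor
  | .atom i => {f | f i = true}
  | .neg A => (CPL0.sem μ A)ᶜ
  | .conj A B => CPL0.sem μ A ∩ CPL0.sem μ B
  | .disj A B => CPL0.sem μ A ∪ CPL0.sem μ B
  | .cnt q A => if qq q ≤ μ (CPL0.sem μ A) then Set.univ else ∅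
  | .dnt q A => if μ (CPL0.sem μ A) < qq q then Set.univ else ∅

/-- Labelled formulas: `b ↣ A` (`fwd`) and `b ↢ A` (`bwd`). -/
inductive LF : Type where
  | fwd : BF → CPL0 → LF
  | bwd : BF → CPL0 → LF
deriving DecidableEq

/-- Validity of a labelled formula: `b ↣ A` is valid when `⟦b⟧ ⊆ ⟦A⟧`,
and `b ↢ A` is valid when `⟦A⟧ ⊆ ⟦b⟧`. -/
def LF.valid (μ : Measure Cantor) : LF → Prop
  | .fwd b A => BF.sem b ⊆ CPL0.sem μ A
  | .bwd b A => CPL0.sem μ A ⊆ BF.sem b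

/-- The labelled, one-sided, single-succedent sequent calculus for CPL₀:
`Der μ L` means that the sequent `⊢ L` is derivable. -/
inductive Der (μ : Measure Cantor) : LF → Prop where
  | ax1 {b : BF} {n : ℕ} :
      BF.sem b ⊆ BF.sem (.var n) → Der μ (.fwd b (.atom n))
  | ax2 {b : BF} {n : ℕ} :
      BF.sem (.var n) ⊆ BF.sem b → Der μ (.bwd b (.atom n))
  | runion {b c d : BF} {A : CPL0} :
      Der μ (.fwd c A) → Der μ (.fwd d A) →
      BF.sem b ⊆ BF.sem (.disj c d) → Der μ (.fwd b A)
  | rinter {b c d : BF} {A : CPL0} :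
      Der μ (.bwd c A) → Der μ (.bwd d A) →
      BF.sem (.conj c d) ⊆ BF.sem b → Der μ (.bwd b A)
  | negF {b c : BF} {A : CPL0} :
      Der μ (.bwd c A) → BF.sem b ⊆ BF.sem (.neg c) → Der μ (.fwd b (.neg A))
  | negB {b c : BF} {A : CPL0} :
      Der μ (.fwd c A) → BF.sem (.neg c) ⊆ BF.sem b → Der μ (.bwd b (.neg A))
  | disjF1 {b : BF} {A B : CPL0} :
      Der μ (.fwd b A) → Der μ (.fwd b (.disj A B))
  | disjF2 {b : BF} {A B : CPL0} :
      Der μ (.fwd b B) → Der μ (.fwd b (.disj A B))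
  | disjB {b : BF} {A B : CPL0} :
      Der μ (.bwd b A) → Der μ (.bwd b B) → Der μ (.bwd b (.disj A B))
  | conjF {b : BF} {A B : CPL0} :
      Der μ (.fwd b A) → Der μ (.fwd b B) → Der μ (.fwd b (.conj A B))
  | conjB1 {b : BF} {A B : CPL0} :
      Der μ (.bwd b A) → Der μ (.bwd b (.conj A B))
  | conjB2 {b : BF} {A B : CPL0} :
      Der μ (.bwd b B) → Der μ (.bwd b (.conj A B))
  | muF {b : BF} {A : CPL0} :
      μ (BF.sem b) = 0 → Der μ (.fwd b A)
  | muB {b : BF} {A : CPL0} :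
      μ (BF.sem b) = 1 → Der μ (.bwd b A)
  | cntF {b c : BF} {q : I01} {A : CPL0} :
      Der μ (.fwd c A) → qq q ≤ μ (BF.sem c) → Der μ (.fwd b (.cnt q A))
  | cntB {b c : BF} {q : I01} {A : CPL0} :
      Der μ (.bwd c A) → μ (BF.sem c) < qq q → Der μ (.bwd b (.cnt q A))
  | dntF {b c : BF} {q : I01} {A : CPL0} :
      Der μ (.bwd c A) → μ (BF.sem c) < qq q → Der μ (.fwd b (.dnt q A))
  | dntB {b c : BF} {q : I01} {A : CPL0} :
      Der μ (.fwd c A) → qq q ≤ μ (BF.sem c) → Der μ (.bwd b (.dnt q A))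

/-- Sequents: either a labelled formula `⊢ L`, or the falsum sequent `⊢ ⊥`. -/
inductive Sequent : Type where
  | lf : LF → Sequent
  | falsum : Sequent
deriving DecidableEq

/-- Validity of a sequent: the falsum sequent `⊢ ⊥` is never valid. -/
def Sequent.valid (μ : Measure Cantor) : Sequent → Prop
  | .lf L => L.valid μ
  | .falsum => False

/-- Derivability of a sequent: the falsum sequent `⊢ ⊥` is never derivable. -/
def Sequent.der (μ : Measure Cantor) : Sequent → Prop
  | .lf L => Der μ L
  | .falsum => False

/-- The one-step decomposition rewriting relation `⇝₀` from a sequent to a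
finite set of sequents. -/
inductive Dec0 (μ : Measure Cantor) : Sequent → Finset Sequent → Prop where
  | negF {b c : BF} {A : CPL0} :
      BF.sem b ⊆ BF.sem (.neg c) →
      Dec0 μ (.lf (.fwd b (.neg A))) {Sequent.lf (.bwd c A)}
  | negB {b c : BF} {A : CPL0} :
      BF.sem (.neg c) ⊆ BF.sem b →
      Dec0 μ (.lf (.bwd b (.neg A))) {Sequent.lf (.fwd c A)}
  | disjF {b c d : BF} {A B : CPL0} :
      BF.sem b ⊆ BF.sem (.disj c d) →
      Dec0 μ (.lf (.fwd b (.disj A B))) {Sequent.lf (.fwd c A), Sequent.lf (.fwd d B)}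
  | disjB {b : BF} {A B : CPL0} :
      Dec0 μ (.lf (.bwd b (.disj A B))) {Sequent.lf (.bwd b A), Sequent.lf (.bwd b B)}
  | conjF {b : BF} {A B : CPL0} :
      Dec0 μ (.lf (.fwd b (.conj A B))) {Sequent.lf (.fwd b A), Sequent.lf (.fwd b B)}
  | conjB {b c d : BF} {A B : CPL0} :
      BF.sem (.conj c d) ⊆ BF.sem b →
      Dec0 μ (.lf (.bwd b (.conj A B))) {Sequent.lf (.bwd c A), Sequent.lf (.bwd d B)}
  | cntF {b c : BF} {q : I01} {A : CPL0} :
      qq q ≤ μ (BF.sem c) →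
      Dec0 μ (.lf (.fwd b (.cnt q A))) {Sequent.lf (.fwd c A)}
  | cntB {b c : BF} {q : I01} {A : CPL0} :
      μ (BF.sem c) < qq q →
      Dec0 μ (.lf (.bwd b (.cnt q A))) {Sequent.lf (.bwd c A)}
  | dntF {b c : BF} {q : I01} {A : CPL0} :
      μ (BF.sem c) < qq q →
      Dec0 μ (.lf (.fwd b (.dnt q A))) {Sequent.lf (.bwd c A)}
  | dntB {b c : BF} {q : I01} {A : CPL0} :
      qq q ≤ μ (BF.sem c) →
      Dec0 μ (.lf (.bwd b (.dnt q A))) {Sequent.lf (.fwd c A)}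
  | muF {b : BF} {A : CPL0} :
      μ (BF.sem b) = 0 → Dec0 μ (.lf (.fwd b A)) ∅
  | muB {b : BF} {A : CPL0} :
      μ (BF.sem b) = 1 → Dec0 μ (.lf (.bwd b A)) ∅
  | dnt0 {b : BF} {A : CPL0} :
      μ (BF.sem b) ≠ 0 → Dec0 μ (.lf (.fwd b (.dnt 0 A))) {Sequent.falsum}
  | cnt0 {b : BF} {A : CPL0} :
      μ (BF.sem b) ≠ 1 → Dec0 μ (.lf (.bwd b (.cnt 0 A))) {Sequent.falsum}

/-- The set-decomposition relation `⇝` on finite sets of sequents: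
`Φ ⇝ Ψ` when `Φ = Φ' ∪ {⊢ L}`, `⊢ L ⇝₀ Ψ'` and `Ψ = Φ' ∪ Ψ'`. -/
def Dec (μ : Measure Cantor) (Φ Ψ : Finset Sequent) : Prop :=
  ∃ (Φ' Ψ' : Finset Sequent) (s : Sequent),
    Dec0 μ s Ψ' ∧ Φ = insert s Φ' ∧ Ψ = Φ' ∪ Ψ'

/-- A finite set of sequents is `⇝`-normal when no decomposition step applies to it. -/
def DecNormal (μ : Measure Cantor) (Φ : Finset Sequent) : Prop :=
  ¬ ∃ Ψ : Finset Sequent, Dec μ Φ Ψ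

theorem BF.exists_support (b : BF) :
    ∃ s : Finset ℕ, ∀ f g : Cantor, (∀ i ∈ s, f i = g i) → (f ∈ b.sem ↔ g ∈ b.sem) := by
  induction b with
  | var n => exact ⟨{n}, fun f g h => by simp [BF.sem, h n (by simp)]⟩
  | tt => exact ⟨∅, fun f g h => by simp [BF.sem]⟩
  | ff => exact ⟨∅, fun f g h => by simp [BF.sem]⟩
  | neg b ih =>
    obtain ⟨s, hs⟩ := ih
    exact ⟨s, fun f g h => not_congr (hs f g h)⟩
  | conj b c ih1 ih2 =>
    obtain ⟨s, hs⟩ := ih1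
    obtain ⟨t, ht⟩ := ih2
    exact ⟨s ∪ t, fun f g h => and_congr (hs f g fun i hi => h i (by simp [hi]))
      (ht f g fun i hi => h i (by simp [hi]))⟩
  | disj b c ih1 ih2 =>
    obtain ⟨s, hs⟩ := ih1
    obtain ⟨t, ht⟩ := ih2
    exact ⟨s ∪ t, fun f g h => or_congr (hs f g fun i hi => h i (by simp [hi]))
      (ht f g fun i hi => h i (by simp [hi]))⟩

theorem BF.measurable_sem (b : BF) : MeasurableSet b.sem := by
  induction b with
  | var n => exact measurableSet_eq_fun (measurable_pi_apply n) measurable_const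
  | tt => exact MeasurableSet.univ
  | ff => exact MeasurableSet.empty
  | neg b ih => exact ih.compl
  | conj b c ih1 ih2 => exact ih1.inter ih2
  | disj b c ih1 ih2 => exact ih1.union ih2

theorem BF.sem_empty {μ : Measure Cantor} (hμ : IsCantorMeasure μ) {b : BF}
    (h : μ b.sem = 0) : b.sem = ∅ := by
  by_contra hne
  obtain ⟨f, hf⟩ := Set.nonempty_iff_ne_empty.mpr hne
  obtain ⟨s, hs⟩ := b.exists_support
  have h1 : {g : Cantor | ∀ i ∈ s, g i = f i} ⊆ b.sem := fun g hg => (hs g f hg).2 hf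
  have h2 := measure_mono_null h1 h
  rw [hμ.2] at h2
  simp at h2

theorem BF.sem_univ {μ : Measure Cantor} (hμ : IsCantorMeasure μ) {b : BF}
    (h : μ b.sem = 1) : b.sem = Set.univ := by
  haveI := hμ.1
  have h1 : μ (BF.neg b).sem = 0 := (prob_compl_eq_zero_iff b.measurable_sem).2 h
  exact Set.compl_empty_iff.1 (BF.sem_empty hμ h1)

theorem Der.sound {μ : Measure Cantor} (hμ : IsCantorMeasure μ) {L : LF} (h : Der μ L) :
    L.valid μ := by
  induction h with
  | ax1 h => exact h
  | ax2 h => exact h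
  | runion _ _ h i1 i2 => exact h.trans (Set.union_subset i1 i2)
  | rinter _ _ h i1 i2 => exact (Set.subset_inter i1 i2).trans h
  | negF _ h i => exact h.trans (Set.compl_subset_compl.2 i)
  | negB _ h i => exact (Set.compl_subset_compl.2 i).trans h
  | disjF1 _ i => exact i.trans Set.subset_union_left
  | disjF2 _ i => exact i.trans Set.subset_union_right
  | disjB _ _ i1 i2 => exact Set.union_subset i1 i2
  | conjF _ _ i1 i2 => exact Set.subset_inter i1 i2
  | conjB1 _ i => exact Set.inter_subset_left.trans i
  | conjB2 _ i => exact Set.inter_subset_right.trans i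
  | muF h => simp [LF.valid, BF.sem_empty hμ h]
  | muB h => simp [LF.valid, BF.sem_univ hμ h]
  | cntF _ h i => simp [LF.valid, CPL0.sem, h.trans (measure_mono i)]
  | cntB _ h i => simp [LF.valid, CPL0.sem, not_le.2 ((measure_mono i).trans_lt h)]
  | dntF _ h i => simp [LF.valid, CPL0.sem, (measure_mono i).trans_lt h]
  | dntB _ h i => simp [LF.valid, CPL0.sem, not_lt.2 (h.trans (measure_mono i))]

theorem qq_le_one (q : I01) : qq q ≤ 1 := by
  have : ((q.1 : ℚ) : ℝ) ≤ 1 := by exact_mod_cast q.2.2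
  simpa [qq] using this

theorem qq_pos {q : I01} (h : q ≠ 0) : 0 < qq q := by
  have h1 : (0 : ℚ) < q.1 := lt_of_le_of_ne q.2.1 (fun e => h (Subtype.ext e.symm))
  simpa [qq] using h1

theorem valid_der_of_normal {μ : Measure Cantor} (hμ : IsCantorMeasure μ) (L : LF)
    (hn : ∀ Ψ, ¬ Dec0 μ (.lf L) Ψ) (hv : L.valid μ) : Der μ L := by
  haveI := hμ.1
  rcases L with ⟨b, A⟩ | ⟨b, A⟩ <;> cases A with
  | atom n => first | exact .ax1 hv | exact .ax2 hv
  | neg A =>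
    first
    | exact (hn _ (.negF (c := .neg b) (by simp [BF.sem]))).elim
    | exact (hn _ (.negB (c := .neg b) (by simp [BF.sem]))).elim
  | conj A B =>
    first
    | exact (hn _ .conjF).elim
    | exact (hn _ (.conjB (c := b) (d := b) (by simp [BF.sem]))).elim
  | disj A B =>
    first
    | exact (hn _ .disjB).elim
    | exact (hn _ (.disjF (c := b) (d := b) (by simp [BF.sem]))).elim
  | cnt q A =>
    first
    | exact (hn _ (.cntF (c := .tt) (by simpa [BF.sem] using qq_le_one q))).elim
    | by_cases hq : q = 0
      · subst hq
        by_cases hb : μ b.sem = 1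
        · exact .muB hb
        · exact (hn _ (.cnt0 hb)).elim
      · exact (hn _ (.cntB (c := .ff) (by simpa [BF.sem] using qq_pos hq))).elim
  | dnt q A =>
    first
    | exact (hn _ (.dntB (c := .tt) (by simpa [BF.sem] using qq_le_one q))).elim
    | by_cases hq : q = 0
      · subst hq
        by_cases hb : μ b.sem = 0
        · exact .muF hb
        · exact (hn _ (.dnt0 hb)).elim
      · exact (hn _ (.dntF (c := .ff) (by simpa [BF.sem] using qq_pos hq))).elim

/-- If a finite set `Φ` of CPL₀ labelled sequents is `⇝`-normal,
then every sequent in `Φ` is valid if and only if every sequent in `Φ` is derivable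
in the proof system for CPL₀. -/
theorem cpl0_normal_valid_iff_derivable
    (μ : Measure Cantor) (hμ : IsCantorMeasure μ)
    (Φ : Finset Sequent) (hΦ : DecNormal μ Φ) :
    (∀ s ∈ Φ, s.valid μ) ↔ (∀ s ∈ Φ, s.der μ) := by
  refine forall_congr' fun s => forall_congr' fun hs => ?_
  cases s with
  | falsum => exact Iff.rfl
  | lf L =>
    refine ⟨valid_der_of_normal hμ L fun Ψ h => hΦ ⟨Φ ∪ Ψ, Φ, Ψ, _, h, ?_, rfl⟩,
      fun h => Der.sound hμ h⟩
    exact (Finset.insert_eq_of_mem hs).symm
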